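/- arXiv:1810.09287 — 2 statements merged into one kernel-verified Lean document; each statement's English description precedes it below -/
import Mathlib

section
/- Let C be a finite quotienting Boolean algebra, A an alphabet, and let h be the J-depth of the finite monoid A*/~_C. Let α: A* → M and β: A* → N be C-compatible morphisms and S ⊆ N a good subset. Then for every (s,T) ∈ M × 2^N, the following are equivalent: (1) (s,T) is the root label of some (α,β,S)-tree; (2) (s,T) is the root label of some (α,β,S)-tree whose operational height is at most h. -/
open scoped Pointwise

/-! Infrastructure: classes of languages, quotienting Boolean algebras, the canonical
equivalence `∼_C` on `A*`, the quotient monoid `A*/∼_C`, `C`-compatible morphisms, good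
subsets and `(α,β,S)`-trees (represented through the inductive predicate describing
the possible root labels), and the `J`-depth of a finite monoid. -/

/-- A class of languages: to every alphabet it associates a set of languages. -/
abbrev LangClass : Type 1 := ∀ A : Type, Set (Language A)

/-- A morphism `α : A* → M` recognizes `L` when `L = α⁻¹(F)` for some `F ⊆ M`. -/
def Recognizes {A M : Type} [Monoid M] (α : FreeMonoid A →* M) (L : Language A) : Prop :=
  ∃ F : Set M, L = {w : List A | α (FreeMonoid.ofList w) ∈ F}

/-- `C` is a quotienting Boolean algebra: each `C(A)` contains `∅` and `A*`, is
closed under union, intersection and complement, and under word quotients. -/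
def IsQBA (C : LangClass) : Prop :=
  ∀ (A : Type) [Fintype A],
    (⊥ : Language A) ∈ C A ∧ (⊤ : Language A) ∈ C A ∧
    (∀ K L : Language A, K ∈ C A → L ∈ C A → K ⊔ L ∈ C A ∧ K ⊓ L ∈ C A) ∧
    (∀ L ∈ C A, Lᶜ ∈ C A) ∧
    (∀ L ∈ C A, ∀ u : List A,
      {w : List A | u ++ w ∈ L} ∈ C A ∧ {w : List A | w ++ u ∈ L} ∈ C A)

/-- `C` is a finite class: `C(A)` is a finite set for every alphabet. -/
def IsFiniteClass (C : LangClass) : Prop :=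
  ∀ (A : Type) [Fintype A], (C A).Finite

/-- The canonical equivalence `∼_C` on `A*` associated with (the value at `A` of) a
class of languages: `u ∼_C v` iff `u` and `v` belong to the same languages of `C(A)`. -/
def cRel {A : Type} (𝒞 : Set (Language A)) (u v : FreeMonoid A) : Prop :=
  ∀ L ∈ 𝒞, (FreeMonoid.toList u ∈ L ↔ FreeMonoid.toList v ∈ L)

/-- The congruence on `A*` given by `∼_C` (the fact that `∼_C` is a congruence for
concatenation, which holds since `C` is a quotienting Boolean algebra, is taken as the
hypothesis `hcong`). Its quotient `(cCon 𝒞 hcong).Quotient` is the monoid `A*/∼_C`,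
and `(cCon 𝒞 hcong).mk'` is the morphism `w ↦ [w]_C`. -/
def cCon {A : Type} (𝒞 : Set (Language A))
    (hcong : ∀ u v u' v' : FreeMonoid A,
      cRel 𝒞 u u' → cRel 𝒞 v v' → cRel 𝒞 (u * v) (u' * v')) :
    Con (FreeMonoid A) where
  r := cRel 𝒞
  iseqv := ⟨fun _ _ _ => Iff.rfl, fun h L hL => (h L hL).symm,
    fun h h' L hL => (h L hL).trans (h' L hL)⟩
  mul' := fun h h' => hcong _ _ _ _ h h'

/-- A morphism `α : A* → M` is `C`-compatible when there is a monoid morphism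
`s ↦ [s]_C` from `M` to `A*/∼_C` such that `[α(w)]_C = [w]_C` for every word `w`. -/
def CCompatible {A : Type} (𝒞 : Set (Language A))
    (hcong : ∀ u v u' v' : FreeMonoid A,
      cRel 𝒞 u u' → cRel 𝒞 v v' → cRel 𝒞 (u * v) (u' * v'))
    {M : Type} [Monoid M] (α : FreeMonoid A →* M) : Prop :=
  ∃ cl : M →* (cCon 𝒞 hcong).Quotient,
    ∀ w : FreeMonoid A, cl (α w) = (cCon 𝒞 hcong).mk' w

/-- `S ⊆ N` is good (for `β`) when it contains `β(A*)` and is closed under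
multiplication. -/
def GoodSubset {A N : Type} [Monoid N] (β : FreeMonoid A →* N) (S : Set N) : Prop :=
  (∀ w : FreeMonoid A, β w ∈ S) ∧ ∀ s ∈ S, ∀ t ∈ S, s * t ∈ S

/-- `TreeRoot α β clM clN S s T` holds exactly when `(s,T) ∈ M × 2^N` is the root
label of some `(α,β,S)`-tree; `clM, clN` are the morphisms `s ↦ [s]_C` coming with the
`C`-compatibility of `α` and `β`. The three constructors correspond to the three kinds
of nodes (leaves, binary nodes and `S`-operation nodes). -/
inductive TreeRoot {A M N Q : Type} [Monoid M] [Monoid N] [Monoid Q]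
    (α : FreeMonoid A →* M) (β : FreeMonoid A →* N)
    (clM : M →* Q) (clN : N →* Q) (S : Set N) : M → Set N → Prop
  | leaf (w : FreeMonoid A) : TreeRoot α β clM clN S (α w) {β w}
  | binary {s₁ : M} {T₁ : Set N} {s₂ : M} {T₂ : Set N} (T : Set N) :
      TreeRoot α β clM clN S s₁ T₁ → TreeRoot α β clM clN S s₂ T₂ →
      T ⊆ T₁ * T₂ → TreeRoot α β clM clN S (s₁ * s₂) T
  | op {e : M} {E : Set N} (T : Set N) :
      TreeRoot α β clM clN S e E → e * e = e → E * E = E →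
      T ⊆ E * {t | t ∈ S ∧ clM e = clN t} * E →
      TreeRoot α β clM clN S e T

/-- `TreeRootH α β clM clN S h s T` holds exactly when `(s,T)` is the root label of
some `(α,β,S)`-tree of operational height at most `h` (the index is incremented at
`S`-operation nodes). -/
inductive TreeRootH {A M N Q : Type} [Monoid M] [Monoid N] [Monoid Q]
    (α : FreeMonoid A →* M) (β : FreeMonoid A →* N)
    (clM : M →* Q) (clN : N →* Q) (S : Set N) : ℕ → M → Set N → Prop
  | leaf (h : ℕ) (w : FreeMonoid A) : TreeRootH α β clM clN S h (α w) {β w}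
  | binary {h : ℕ} {s₁ : M} {T₁ : Set N} {s₂ : M} {T₂ : Set N} (T : Set N) :
      TreeRootH α β clM clN S h s₁ T₁ → TreeRootH α β clM clN S h s₂ T₂ →
      T ⊆ T₁ * T₂ → TreeRootH α β clM clN S h (s₁ * s₂) T
  | op {h : ℕ} {e : M} {E : Set N} (T : Set N) :
      TreeRootH α β clM clN S h e E → e * e = e → E * E = E →
      T ⊆ E * {t | t ∈ S ∧ clM e = clN t} * E →
      TreeRootH α β clM clN S (h + 1) e T

/-- `JDepthIs Q h` : the `J`-depth of the monoid `Q` is `h`, i.e. `h` is the greatest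
length of a sequence of pairwise distinct elements `s₁, …, s_h` of `Q` such that each
`s_{i+1}` is of the form `x · s_i · y`. -/
def JDepthIs (Q : Type) [Monoid Q] (h : ℕ) : Prop :=
  IsGreatest {n : ℕ | ∃ l : List Q, l.length = n ∧ l.Nodup ∧
    l.Chain' (fun a b => ∃ x y : Q, b = x * a * y)} h

/-!
Along a tree, follow the `J`-class `q` of the image in `Q = A*/∼_C` of the label, and let the budget
be the height of `q` in the `J`-order. A tree either fits in the budget, or its root label is that
of a product `x · f · y` in which a single `S`-operation, at an idempotent `f` whose image is
`J`-equivalent to `q`, exceeds the budget by one. Such a *pivot* absorbs everything else that could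
cost more: a further factor is multiplied into `x` or `y`, and an `S`-operation at an idempotent
`e = x f y` above the pivot is swallowed by it, because `f y e x f = f` holds in `Q`. The latter is
where finiteness of `Q` enters: `f y e x f` is an idempotent below `f` and `J`-equivalent to `f`.
-/

section JOrder

variable {Q : Type*} [Monoid Q]

/-- The `J`-preorder of a monoid, oriented like divisibility: `JDvd a b` says that `a` is a
two-sided divisor of `b`, i.e. that `b` is `J`-below `a`. -/
def JDvd (a b : Q) : Prop := ∃ x y : Q, b = x * a * y

theorem JDvd.refl (a : Q) : JDvd a a := ⟨1, 1, by simp⟩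

theorem JDvd.trans {a b c : Q} (hab : JDvd a b) (hbc : JDvd b c) : JDvd a c := by
  obtain ⟨x, y, rfl⟩ := hab
  obtain ⟨z, t, rfl⟩ := hbc
  exact ⟨z * x, y * t, by simp only [mul_assoc]⟩

theorem JDvd.mul_right (a b : Q) : JDvd a (a * b) := ⟨1, b, by simp⟩

theorem JDvd.mul_left (a b : Q) : JDvd b (a * b) := ⟨a, 1, by simp⟩

variable (Q) in
/-- The preorder of two-sided divisibility. It is not an instance, since it would clash with the
orders that concrete monoids already carry. -/
abbrev jPreorder : Preorder Q where
  le := JDvd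
  le_refl := JDvd.refl
  le_trans _ _ _ := JDvd.trans

/-- The greatest number of steps in a chain of strict two-sided divisors ending at `q`. -/
noncomputable def jHeight (q : Q) : ℕ∞ := @Order.height Q (jPreorder Q) q

theorem JDvd.jHeight_le {p q : Q} (h : JDvd p q) : jHeight p ≤ jHeight q :=
  letI := jPreorder Q
  Order.height_mono h

theorem jHeight_add_one_le {p q : Q} (hpq : JDvd p q) (hqp : ¬JDvd q p) :
    jHeight p + 1 ≤ jHeight q :=
  letI := jPreorder Q
  Order.height_add_one_le ⟨hpq, hqp⟩

theorem JDepthIs.jHeight_lt {Q : Type} [Monoid Q] {h : ℕ} (hJ : JDepthIs Q h) (q : Q) :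
    jHeight q < h := by
  let _ := jPreorder Q
  by_contra! hq
  obtain ⟨p, -, rfl⟩ := Order.exists_series_of_le_height q hq
  have hnodup : p.toList.Nodup := List.nodup_ofFn.mpr p.strictMono.injective
  have hchain : p.toList.IsChain JDvd := p.isChain_toList.imp fun _ _ hab => hab.1
  exact Nat.not_succ_le_self _ (hJ.2 ⟨p.toList, p.length_toList, hnodup, hchain⟩)

end JOrder

section Idempotents

variable {Q : Type*} [Monoid Q] [Finite Q] {e f p x y : Q}

theorem mul_eq_idempotent_symm (hf : IsIdempotentElem f) {a b : Q}
    (ha : a ∈ Subsemigroup.corner f) (hb : b ∈ Subsemigroup.corner f) (hab : a * b = f) :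
    b * a = f := by
  let _ : Monoid (Subsemigroup.corner f) :=
    { one := ⟨f, (Subsemigroup.mem_corner_iff hf).mpr ⟨hf, hf⟩⟩
      one_mul := fun r => Subtype.ext ((Subsemigroup.mem_corner_iff hf).mp r.2).1
      mul_one := fun r => Subtype.ext ((Subsemigroup.mem_corner_iff hf).mp r.2).2 }
  have hab' : (⟨a, ha⟩ * ⟨b, hb⟩ : Subsemigroup.corner f) = 1 := Subtype.ext hab
  exact congrArg Subtype.val (mul_eq_one_symm hab')

theorem idempotent_eq_of_jDvd (hf : IsIdempotentElem f) (hp : IsIdempotentElem p)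
    (hcorner : p ∈ Subsemigroup.corner f) (hJ : JDvd p f) : p = f := by
  obtain ⟨u, v, huv⟩ := hJ
  obtain ⟨hfp, hpf⟩ := (Subsemigroup.mem_corner_iff hf).mp hcorner
  have hleft : f * u * p ∈ Subsemigroup.corner f := ⟨u * p, by simp only [mul_assoc, hpf]⟩
  have hright : p * v * f ∈ Subsemigroup.corner f := ⟨p * v, by simp only [← mul_assoc, hfp]⟩
  have hprod : f * u * p * (p * v * f) = f :=
    calc f * u * p * (p * v * f) = f * (u * (p * p) * v) * f := by simp only [mul_assoc]
      _ = f := by rw [hp.eq, ← huv, hf.eq, hf.eq]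
  have hswap : p * v * f * (f * u * p) = f := mul_eq_idempotent_symm hf hleft hright hprod
  calc p = p * f := hpf.symm
    _ = p * (p * v * f * (f * u * p)) := by rw [hswap]
    _ = p * p * v * f * (f * u * p) := by simp only [mul_assoc]
    _ = f := by rw [hp.eq, hswap]

theorem mul_context_mul_eq_of_jDvd (he : IsIdempotentElem e) (hf : IsIdempotentElem f)
    (hxy : e = x * f * y) (hJ : JDvd e f) : f * y * e * x * f = f := by
  have hidem : IsIdempotentElem (f * y * e * x * f) :=
    calc f * y * e * x * f * (f * y * e * x * f)
        = f * y * e * (x * (f * f) * y) * e * x * f := by simp only [mul_assoc]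
      _ = f * y * (e * e * e) * x * f := by rw [hf.eq, ← hxy]; simp only [mul_assoc]
      _ = f * y * e * x * f := by rw [he.eq, he.eq]
  have hcorner : f * y * e * x * f ∈ Subsemigroup.corner f := ⟨y * e * x, by simp only [mul_assoc]⟩
  refine idempotent_eq_of_jDvd hf hidem hcorner ?_
  obtain ⟨a, b, hab⟩ := hJ
  refine ⟨a * x, y * b, ?_⟩
  calc f = a * (e * e * e) * b := by rw [he.eq, he.eq, ← hab]
    _ = a * (x * f * y * e * (x * f * y)) * b := by rw [← hxy]
    _ = a * x * (f * y * e * x * f) * (y * b) := by simp only [mul_assoc]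

end Idempotents

section CFiber

variable {N Q : Type*} [Monoid N] [Monoid Q] {cl : N →* Q} {S : Set N}

/-- The elements of `S` lying in the class `q`; for `q = [e]_C` this is the set
`{t ∈ S | [e]_C = [t]_C}` that an `S`-operation inserts. -/
def cFiber (cl : N →* Q) (S : Set N) (q : Q) : Set N := {t | t ∈ S ∧ q = cl t}

theorem mul_subset_cFiber (hS : ∀ s ∈ S, ∀ t ∈ S, s * t ∈ S) {U V : Set N} {p q : Q}
    (hU : U ⊆ cFiber cl S p) (hV : V ⊆ cFiber cl S q) : U * V ⊆ cFiber cl S (p * q) := by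
  rintro _ ⟨u, hu, v, hv, rfl⟩
  obtain ⟨huS, rfl⟩ := hU hu
  obtain ⟨hvS, rfl⟩ := hV hv
  exact ⟨hS u huS v hvS, (map_mul cl u v).symm⟩

end CFiber

section Trees

variable {A M N Q : Type} [Monoid M] [Monoid N] [Monoid Q]
  {α : FreeMonoid A →* M} {β : FreeMonoid A →* N} {clM : M →* Q} {clN : N →* Q} {S : Set N}
  {k n : ℕ} {s s₁ s₂ e : M} {T T₁ T₂ E : Set N} {q r : Q}

theorem TreeRootH.succ (h : TreeRootH α β clM clN S k s T) :
    TreeRootH α β clM clN S (k + 1) s T := by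
  induction h with
  | leaf _ w => exact .leaf _ w
  | binary T _ _ hT ih₁ ih₂ => exact .binary T ih₁ ih₂ hT
  | op T _ he hE hT ih => exact .op T ih he hE hT

theorem TreeRootH.one : TreeRootH α β clM clN S n 1 1 := by
  simpa only [map_one, Set.singleton_one] using
    TreeRootH.leaf (α := α) (β := β) (clM := clM) (clN := clN) (S := S) n 1

theorem TreeRootH.subset_cFiber (hcl : ∀ w, clM (α w) = clN (β w)) (hS : GoodSubset β S)
    (h : TreeRootH α β clM clN S k s T) : T ⊆ cFiber clN S (clM s) := by
  induction h with
  | leaf _ w => exact Set.singleton_subset_iff.mpr ⟨hS.1 w, hcl w⟩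
  | binary T _ _ hT ih₁ ih₂ =>
    rw [map_mul]
    exact hT.trans (mul_subset_cFiber hS.2 ih₁ ih₂)
  | @op _ e E T _ he _ hT ih =>
    have hEfE := mul_subset_cFiber hS.2
      (mul_subset_cFiber hS.2 ih (subset_refl (cFiber clN S (clM e)))) ih
    rw [← map_mul, ← map_mul, he, he] at hEfE
    exact hT.trans hEfE

/-- `HasPivot α β clM clN S q n s T` says that `(s,T)` is the root label of a tree of operational
height at most `n + 1` around a distinguished `S`-operation node, the pivot. The child of the pivot
has operational height at most `n` and is labeled by an idempotent `(f,F)` such that `q` is a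
two-sided divisor of `[f]_C`; `(x,X)` and `(y,Y)` are the labels on both sides of the pivot. -/
inductive HasPivot (α : FreeMonoid A →* M) (β : FreeMonoid A →* N) (clM : M →* Q) (clN : N →* Q)
    (S : Set N) (q : Q) (n : ℕ) : M → Set N → Prop
  | intro {x f y : M} {X F Y : Set N} (T : Set N)
      (hX : TreeRootH α β clM clN S (n + 1) x X) (hF : TreeRootH α β clM clN S n f F)
      (hY : TreeRootH α β clM clN S (n + 1) y Y) (hf : IsIdempotentElem f)
      (hFF : IsIdempotentElem F) (hq : JDvd q (clM f))
      (hT : T ⊆ X * (F * cFiber clN S (clM f) * F) * Y) :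
      HasPivot α β clM clN S q n (x * f * y) T

namespace HasPivot

theorem treeRootH_succ (h : HasPivot α β clM clN S q n s T) :
    TreeRootH α β clM clN S (n + 1) s T := by
  obtain ⟨T, hX, hF, hY, hf, hFF, -, hT⟩ := h
  exact .binary T (.binary _ hX (.op _ hF hf hFF subset_rfl) subset_rfl) hY hT

theorem of_jDvd (h : HasPivot α β clM clN S q n s T) (hrq : JDvd r q) :
    HasPivot α β clM clN S r n s T := by
  obtain ⟨T, hX, hF, hY, hf, hFF, hq, hT⟩ := h
  exact ⟨T, hX, hF, hY, hf, hFF, hrq.trans hq, hT⟩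

theorem mul_right (h₁ : HasPivot α β clM clN S q n s₁ T₁)
    (h₂ : TreeRootH α β clM clN S (n + 1) s₂ T₂) (hT : T ⊆ T₁ * T₂) :
    HasPivot α β clM clN S q n (s₁ * s₂) T := by
  obtain ⟨T₁, hX, hF, hY, hf, hFF, hq, hT₁⟩ := h₁
  rw [mul_assoc]
  refine ⟨T, hX, hF, .binary _ hY h₂ subset_rfl, hf, hFF, hq, ?_⟩
  rw [← mul_assoc]
  exact hT.trans (Set.mul_subset_mul_right hT₁)

theorem mul_left (h₁ : TreeRootH α β clM clN S (n + 1) s₁ T₁)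
    (h₂ : HasPivot α β clM clN S q n s₂ T₂) (hT : T ⊆ T₁ * T₂) :
    HasPivot α β clM clN S q n (s₁ * s₂) T := by
  obtain ⟨T₂, hX, hF, hY, hf, hFF, hq, hT₂⟩ := h₂
  rw [← mul_assoc, ← mul_assoc]
  refine ⟨T, .binary _ h₁ hX subset_rfl, hF, hY, hf, hFF, hq, ?_⟩
  rw [mul_assoc T₁, mul_assoc T₁]
  exact hT.trans (Set.mul_subset_mul_left hT₂)

theorem of_op (h : TreeRootH α β clM clN S n e E) (he : IsIdempotentElem e)
    (hE : IsIdempotentElem E) (hT : T ⊆ E * cFiber clN S (clM e) * E) :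
    HasPivot α β clM clN S (clM e) n e T := by
  have hpivot : HasPivot α β clM clN S (clM e) n (1 * e * 1) T :=
    ⟨T, .one, h, .one, he, hE, .refl _, by rwa [one_mul, mul_one]⟩
  rwa [one_mul, mul_one] at hpivot

theorem op [Finite Q] (hcl : ∀ w, clM (α w) = clN (β w)) (hS : GoodSubset β S)
    (h : HasPivot α β clM clN S (clM e) n e E) (he : IsIdempotentElem e)
    (hT : T ⊆ E * cFiber clN S (clM e) * E) : HasPivot α β clM clN S (clM e) n e T := by
  obtain @⟨x, f, y, X, F, Y, E, hX, hF, hY, hf, hFF, hq, hE⟩ := h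
  refine ⟨T, hX, hF, hY, hf, hFF, hq, ?_⟩
  let R (m : M) : Set N := cFiber clN S (clM m)
  have hreturn : clM f * clM y * clM (x * f * y) * clM x * clM f = clM f :=
    mul_context_mul_eq_of_jDvd (he.map clM) (hf.map clM) (by simp only [map_mul]) hq
  have hR {U V : Set N} {a b : M} (hU : U ⊆ R a) (hV : V ⊆ R b) : U * V ⊆ R (a * b) := by
    simpa only [R, map_mul] using mul_subset_cFiber hS.2 hU hV
  have hmiddle : R f * (F * Y * R (x * f * y) * X * F) * R f ⊆ R f := by
    have hF' : F ⊆ R f := hF.subset_cFiber hcl hS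
    have hX' : X ⊆ R x := hX.subset_cFiber hcl hS
    have hY' : Y ⊆ R y := hY.subset_cFiber hcl hS
    have hclass : clM (f * (f * y * (x * f * y) * x * f) * f) = clM f := by
      simp only [map_mul] at hreturn ⊢
      rw [hreturn, (hf.map clM).eq, (hf.map clM).eq]
    have hprod : R f * (F * Y * R (x * f * y) * X * F) * R f ⊆
        R (f * (f * y * (x * f * y) * x * f) * f) :=
      hR (hR subset_rfl (hR (hR (hR (hR hF' hY') subset_rfl) hX') hF')) subset_rfl
    simpa only [R, hclass] using hprod
  calc T ⊆ E * R (x * f * y) * E := hT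
    _ ⊆ X * (F * R f * F) * Y * R (x * f * y) * (X * (F * R f * F) * Y) := by gcongr
    _ = X * (F * (R f * (F * Y * R (x * f * y) * X * F) * R f) * F) * Y := by
      simp only [mul_assoc]
    _ ⊆ X * (F * R f * F) * Y := by gcongr

end HasPivot

theorem TreeRootH.hasPivot_or_treeRootH [Finite Q] (hcl : ∀ w, clM (α w) = clN (β w))
    (hS : GoodSubset β S) (h : TreeRootH α β clM clN S k s T) (hq : JDvd (clM s) q)
    (hn : jHeight q ≤ n) :
    HasPivot α β clM clN S q n s T ∨ TreeRootH α β clM clN S n s T := by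
  induction h generalizing q n with
  | leaf _ w => exact .inr (.leaf _ w)
  | @binary _ s₁ T₁ s₂ T₂ T _ _ hT ih₁ ih₂ =>
    rw [map_mul] at hq
    have h₁ := ih₁ ((JDvd.mul_right _ _).trans hq) hn
    have h₂ := ih₂ ((JDvd.mul_left _ _).trans hq) hn
    rcases h₁ with h₁ | h₁
    · exact .inl (h₁.mul_right (h₂.elim HasPivot.treeRootH_succ succ) hT)
    rcases h₂ with h₂ | h₂
    · exact .inl (h₂.mul_left h₁.succ hT)
    · exact .inr (.binary T h₁ h₂ hT)
  | @op _ e E T _ he hE hT ih =>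
    have hpivot {m : ℕ} (hm : jHeight (clM e) ≤ m) : HasPivot α β clM clN S (clM e) m e T :=
      (ih (.refl _) hm).elim (fun h => h.op hcl hS he hT) (fun h => .of_op h he hE hT)
    by_cases hqe : JDvd q (clM e)
    · exact .inl ((hpivot (hq.jHeight_le.trans hn)).of_jDvd hqe)
    · have hlt : jHeight (clM e) + 1 ≤ n := (jHeight_add_one_le hq hqe).trans hn
      obtain _ | m := n
      · simp at hlt
      · exact .inr (hpivot (by simpa using hlt)).treeRootH_succ

theorem statement9_general [Finite Q] (hcl : ∀ w, clM (α w) = clN (β w)) (hS : GoodSubset β S)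
    {h : ℕ} (hJ : JDepthIs Q h) (s : M) (T : Set N) :
    (∃ k : ℕ, TreeRootH α β clM clN S k s T) ↔ TreeRootH α β clM clN S h s T := by
  refine ⟨fun ⟨k, hk⟩ => ?_, fun hk => ⟨h, hk⟩⟩
  have hlt : jHeight (clM s) + 1 ≤ h := Order.add_one_le_of_lt (hJ.jHeight_lt (clM s))
  obtain _ | n := h
  · simp at hlt
  have hle : jHeight (clM s) ≤ n := by simpa using hlt
  exact (hk.hasPivot_or_treeRootH hcl hS (.refl _) hle).elim HasPivot.treeRootH_succ .succ

end Trees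

theorem statement9
    (C : LangClass) (hqba : IsQBA C) (hfin : IsFiniteClass C)
    {A : Type} [Fintype A]
    (hcong : ∀ u v u' v' : FreeMonoid A,
      cRel (C A) u u' → cRel (C A) v v' → cRel (C A) (u * v) (u' * v'))
    {M N : Type} [Monoid M] [Fintype M] [Monoid N] [Fintype N]
    (α : FreeMonoid A →* M) (β : FreeMonoid A →* N)
    (clM : M →* (cCon (C A) hcong).Quotient)
    (hclM : ∀ w : FreeMonoid A, clM (α w) = (cCon (C A) hcong).mk' w)
    (clN : N →* (cCon (C A) hcong).Quotient)
    (hclN : ∀ w : FreeMonoid A, clN (β w) = (cCon (C A) hcong).mk' w)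
    (S : Set N) (hS : GoodSubset β S)
    (h : ℕ) (hJ : JDepthIs (cCon (C A) hcong).Quotient h)
    (s : M) (T : Set N) :
    (∃ k : ℕ, TreeRootH α β clM clN S k s T) ↔ TreeRootH α β clM clN S h s T := by
  have hsurj : Function.Surjective (clM ∘ α) :=
    (funext hclM : clM ∘ α = (cCon (C A) hcong).mk') ▸ Con.mk'_surjective
  have : Finite (cCon (C A) hcong).Quotient := .of_surjective clM hsurj.of_comp
  exact statement9_general (fun w => (hclM w).trans (hclN w).symm) hS hJ s T
end

section
/- Let C be a finite quotienting Boolean algebra, A an alphabet, α: A* → M and β: A* → N C-compatible morphisms, and S ⊆ N a good subset. Then every pair (s,T) ∈ M × 2^N which is the label of some node of an (α,β,S)-tree satisfies T ⊆ {t ∈ S | [t]_C = [s]_C}. -/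
open scoped Pointwise

/-! The map `t ↦ [t]_C` is multiplicative, so a product of elements of `S` lying over `p` and `q`
stays in `S` and lies over `p * q`; this settles binary nodes. At an `S`-operation node the label
`e` is idempotent, hence so is `[e]_C`, and the part of `S` lying over `[e]_C` is closed under
multiplication. -/

section Fibers

variable {N Q F : Type*} [Mul N] [Mul Q] [FunLike F N Q] [MulHomClass F N Q] {S : Set N}

theorem inter_fiber_mul_inter_fiber_subset (f : F) (hS : S * S ⊆ S) (p q : Q) :
    (S ∩ f ⁻¹' {p}) * (S ∩ f ⁻¹' {q}) ⊆ S ∩ f ⁻¹' {p * q} := by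
  refine Set.subset_inter
    ((Set.mul_subset_mul Set.inter_subset_left Set.inter_subset_left).trans hS)
    ((Set.mul_subset_mul Set.inter_subset_right Set.inter_subset_right).trans ?_)
  simpa only [Set.singleton_mul_singleton] using
    Set.preimage_mul_preimage_subset f (s := {p}) (t := {q})

theorem inter_fiber_mul_self_subset (f : F) (hS : S * S ⊆ S) {q : Q}
    (hq : IsIdempotentElem q) :
    (S ∩ f ⁻¹' {q}) * (S ∩ f ⁻¹' {q}) ⊆ S ∩ f ⁻¹' {q} := by
  simpa only [hq.eq] using inter_fiber_mul_inter_fiber_subset f hS q q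

end Fibers

theorem GoodSubset.mul_self_subset {A N : Type} [Monoid N] {β : FreeMonoid A →* N} {S : Set N}
    (hS : GoodSubset β S) : S * S ⊆ S :=
  Set.mul_subset_iff.2 hS.2

theorem statement11_general {A M N Q : Type} [Monoid M] [Monoid N] [Monoid Q]
    {α : FreeMonoid A →* M} {β : FreeMonoid A →* N} {clM : M →* Q} {clN : N →* Q}
    (hcl : ∀ w : FreeMonoid A, clM (α w) = clN (β w))
    {S : Set N} (hS : GoodSubset β S) {s : M} {T : Set N}
    (htree : TreeRoot α β clM clN S s T) :
    T ⊆ {t | t ∈ S ∧ clN t = clM s} := by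
  change T ⊆ S ∩ clN ⁻¹' {clM s}
  induction htree with
  | leaf w => exact Set.singleton_subset_iff.2 ⟨hS.1 w, (hcl w).symm⟩
  | @binary s₁ T₁ s₂ T₂ T _ _ hT ih₁ ih₂ =>
    calc
      T ⊆ T₁ * T₂ := hT
      _ ⊆ (S ∩ clN ⁻¹' {clM s₁}) * (S ∩ clN ⁻¹' {clM s₂}) := Set.mul_subset_mul ih₁ ih₂
      _ ⊆ S ∩ clN ⁻¹' {clM s₁ * clM s₂} :=
        inter_fiber_mul_inter_fiber_subset clN hS.mul_self_subset _ _
      _ = S ∩ clN ⁻¹' {clM (s₁ * s₂)} := by rw [map_mul]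
  | @op e E T _ he _ hT ih =>
    set P := S ∩ clN ⁻¹' {clM e}
    have mul_self_subset : P * P ⊆ P :=
      inter_fiber_mul_self_subset clN hS.mul_self_subset (IsIdempotentElem.map he clM)
    have middle_subset : {t | t ∈ S ∧ clM e = clN t} ⊆ P := fun _ ht => ⟨ht.1, ht.2.symm⟩
    calc
      T ⊆ E * {t | t ∈ S ∧ clM e = clN t} * E := hT
      _ ⊆ P * P * P := Set.mul_subset_mul (Set.mul_subset_mul ih middle_subset) ih
      _ ⊆ P * P := Set.mul_subset_mul_right mul_self_subset
      _ ⊆ P := mul_self_subset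

theorem statement11
    (C : LangClass) (hqba : IsQBA C) (hfin : IsFiniteClass C)
    {A : Type} [Fintype A]
    (hcong : ∀ u v u' v' : FreeMonoid A,
      cRel (C A) u u' → cRel (C A) v v' → cRel (C A) (u * v) (u' * v'))
    {M N : Type} [Monoid M] [Fintype M] [Monoid N] [Fintype N]
    (α : FreeMonoid A →* M) (β : FreeMonoid A →* N)
    (clM : M →* (cCon (C A) hcong).Quotient)
    (hclM : ∀ w : FreeMonoid A, clM (α w) = (cCon (C A) hcong).mk' w)
    (clN : N →* (cCon (C A) hcong).Quotient)
    (hclN : ∀ w : FreeMonoid A, clN (β w) = (cCon (C A) hcong).mk' w)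
    (S : Set N) (hS : GoodSubset β S)
    (s : M) (T : Set N) (htree : TreeRoot α β clM clN S s T) :
    T ⊆ {t | t ∈ S ∧ clN t = clM s} :=
  statement11_general (fun w => (hclM w).trans (hclN w).symm) hS htree
end
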